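/- Let X be a stable set of functions on Ω, 𝒳 a stable ring on X, and μ : 𝒳 → L̄⁰₊ a stable set function satisfying (M1) and finite additivity (property (M2) for finite disjoint sequences). Then: (M3) μ(V|A ⊔ W|B) + μ(V|A ⊓ W|B) = μ(V|A) + μ(W|B) for all V|A, W|B ∈ 𝒳; (M4) μ(V|A) ≤ μ(W|B) whenever V|A ⊑ W|B; (M5) μ(W|B ⊓ (V|A)^⊏) = μ(W|B) − μ(V|A) whenever V|A ⊑ W|B and μ(V|A) < ∞ a.s.; (M6) if μ is a stable pre-measure, then μ(⊔_k V_k|A_k) ≤ ∑_k μ(V_k|A_k) for every sequence (V_k|A_k) in 𝒳 with ⊔_k V_k|A_k ∈ 𝒳; (M7) μ is a stable pre-measure if and only if μ(V_k|A_k) ↑ μ(⊔_k V_k|A_k) a.s. for every increasing sequence (V_k|A_k) in 𝒳 with ⊔_k V_k|A_k ∈ 𝒳; (M8) if μ(V|A) < ∞ a.s. for all V|A ∈ 𝒳, then μ is a stable pre-measure if and only if μ(V_k|A_k) ↓ μ(⊓_k V_k|A_k) a.s. for every decreasing sequence (V_k|A_k) in 𝒳 with ⊓_k V_k|A_k ∈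 𝒳. -/

import Mathlib

/-!
Common framework for conditional set theory and conditional measure theory
in the sense of Drapeau–Jamneshan–Karliczek–Kupper, specialized to the
measure algebra associated to a probability space `(Ω, F, P)`.

Functions on `Ω` are identified when they agree `P`-a.s., and measurable sets
are identified when their symmetric difference is a null set.  Conditional
subsets of a stable set `X` are represented by raw pairs `(V, A)` consisting of
a set of functions and a (measurable) base set; all notions are formulated with
respect to the almost-sure identifications via the relations `cle` and `ceq`.
-/

open MeasureTheory Filter Set Topology
open scoped ENNReal

noncomputable section

namespace CondMT

variable {Ω E F' : Type*}

/-- A countable partition of `Ω` into measurable sets (modulo `P`-null sets). -/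
structure Partition {Ω : Type*} (mΩ : MeasurableSpace Ω) (P : @Measure Ω mΩ) where
  part : ℕ → Set Ω
  meas : ∀ k, MeasurableSet[mΩ] (part k)
  disj : ∀ i j, i ≠ j → P (part i ∩ part j) = 0
  cover : P ((⋃ k, part k)ᶜ) = 0

variable {mΩ : MeasurableSpace Ω}

open Classical in
/-- The concatenation `∑ x_k|A_k` of a sequence of functions along a partition:
the (a.s. unique) function equal to `x_k` on `A_k` for every `k`. -/
def Partition.concat {P : @Measure Ω mΩ} (A : Partition mΩ P) (x : ℕ → Ω → E) : Ω → E :=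
  fun ω => if h : ∃ k, ω ∈ A.part k then x (Nat.find h) ω else x 0 ω

/-- A stable set of functions on `Ω`: nonempty, closed under a.s. modification and
closed under countable concatenations along partitions. -/
def Stable (P : @Measure Ω mΩ) (X : Set (Ω → E)) : Prop :=
  X.Nonempty ∧ (∀ x ∈ X, ∀ y, x =ᵐ[P] y → y ∈ X) ∧
    ∀ (A : Partition mΩ P) (x : ℕ → Ω → E), (∀ k, x k ∈ X) → A.concat x ∈ X

/-- Raw data of a conditional subset `V|A`: the carrier `V` and the base set `A`. -/
abbrev CondRaw (Ω E : Type*) := Set (Ω → E) × Set Ω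

/-- `S` represents a conditional subset of the stable set `X`: the carrier is a
stable subset of `X` and the base is measurable. -/
def IsCond (P : @Measure Ω mΩ) (X : Set (Ω → E)) (S : CondRaw Ω E) : Prop :=
  Stable P S.1 ∧ S.1 ⊆ X ∧ MeasurableSet[mΩ] S.2

/-- Conditional inclusion `V|A ⊑ W|B`: `A ⊆ B` a.s., and every `x|A`, `x ∈ V`,
coincides a.s. on `A` with some `y|A`, `y ∈ W`. -/
def cle (P : @Measure Ω mΩ) (S T : CondRaw Ω E) : Prop :=
  P (S.2 \ T.2) = 0 ∧ ∀ x ∈ S.1, ∃ y ∈ T.1, ∀ᵐ ω ∂P, ω ∈ S.2 → x ω = y ω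

/-- Identification of conditional subsets (equality in the conditional power set). -/
def ceq (P : @Measure Ω mΩ) (S T : CondRaw Ω E) : Prop := cle P S T ∧ cle P T S

/-- `x|C ∈ V|C`: the restriction of `x` to `C` agrees a.s. on `C` with an element of `V`. -/
def memOn (P : @Measure Ω mΩ) (C : Set Ω) (x : Ω → E) (V : Set (Ω → E)) : Prop :=
  ∃ y ∈ V, ∀ᵐ ω ∂P, ω ∈ C → x ω = y ω

/-- `∑ V_k|A_k`, the set of concatenations of sequences taken from the `V_k`. -/
def concatSet (P : @Measure Ω mΩ) (A : Partition mΩ P) (V : ℕ → Set (Ω → E)) :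
    Set (Ω → E) :=
  {f | ∃ x : ℕ → Ω → E, (∀ k, x k ∈ V k) ∧ f =ᵐ[P] A.concat x}

/-- Countable concatenation `∑ (V_k|B_k)|A_k := (∑ V_k|A_k)|⋃ (A_k ∩ B_k)` in the
conditional power set. -/
def condConcat (P : @Measure Ω mΩ) (A : Partition mΩ P) (S : ℕ → CondRaw Ω E) :
    CondRaw Ω E :=
  (concatSet P A fun k => (S k).1, ⋃ k, A.part k ∩ (S k).2)

/-- Restriction `(V|A)|B := V|(A ∩ B)`. -/
def crestrict (S : CondRaw Ω E) (B : Set Ω) : CondRaw Ω E := (S.1, S.2 ∩ B)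

/-- The degenerate conditional subset `X|∅ = {∗}`, the least element of `P(X)`. -/
def cbot (X : Set (Ω → E)) : CondRaw Ω E := (X, (∅ : Set Ω))

/-- The greatest element `X = X|Ω` of `P(X)`. -/
def ctop (X : Set (Ω → E)) : CondRaw Ω E := (X, (univ : Set Ω))

/-- `a` is a supremum (conditional union) of the family `s` in `(P(X), ⊑)`. -/
def IsSupOf (P : @Measure Ω mΩ) (X : Set (Ω → E)) (s : Set (CondRaw Ω E))
    (a : CondRaw Ω E) : Prop :=
  IsCond P X a ∧ (∀ b ∈ s, cle P b a) ∧
    ∀ c, IsCond P X c → (∀ b ∈ s, cle P b c) → cle P a c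

/-- `a` is an infimum (conditional intersection) of the family `s` in `(P(X), ⊑)`. -/
def IsInfOf (P : @Measure Ω mΩ) (X : Set (Ω → E)) (s : Set (CondRaw Ω E))
    (a : CondRaw Ω E) : Prop :=
  IsCond P X a ∧ (∀ b ∈ s, cle P a b) ∧
    ∀ c, IsCond P X c → (∀ b ∈ s, cle P c b) → cle P c a

open Classical in
/-- The conditional union (supremum) of a family of conditional subsets. -/
def cSup (P : @Measure Ω mΩ) (X : Set (Ω → E)) (s : Set (CondRaw Ω E)) : CondRaw Ω E :=
  if h : ∃ a, IsSupOf P X s a then h.choose else ctop X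

open Classical in
/-- The conditional intersection (infimum) of a family of conditional subsets. -/
def cInf (P : @Measure Ω mΩ) (X : Set (Ω → E)) (s : Set (CondRaw Ω E)) : CondRaw Ω E :=
  if h : ∃ a, IsInfOf P X s a then h.choose else ctop X

/-- Binary conditional union. -/
def cSup₂ (P : @Measure Ω mΩ) (X : Set (Ω → E)) (a b : CondRaw Ω E) : CondRaw Ω E :=
  cSup P X {a, b}

/-- Binary conditional intersection. -/
def cInf₂ (P : @Measure Ω mΩ) (X : Set (Ω → E)) (a b : CondRaw Ω E) : CondRaw Ω E :=
  cInf P X {a, b}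

/-- Conditional union of an indexed family. -/
def cSupFam (P : @Measure Ω mΩ) (X : Set (Ω → E)) {ι : Sort*}
    (S : ι → CondRaw Ω E) : CondRaw Ω E :=
  cSup P X (range S)

/-- Conditional intersection of an indexed family. -/
def cInfFam (P : @Measure Ω mΩ) (X : Set (Ω → E)) {ι : Sort*}
    (S : ι → CondRaw Ω E) : CondRaw Ω E :=
  cInf P X (range S)

/-- Disjointness of conditional subsets: `V|A ⊓ W|B = {∗}`. -/
def cdisjoint (P : @Measure Ω mΩ) (X : Set (Ω → E)) (a b : CondRaw Ω E) : Prop :=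
  ceq P (cInf₂ P X a b) (cbot X)

/-- The conditional complement `(V|A)^⊏ := ⊔ {W|B : W|B ⊓ V|A = {∗}}`. -/
def ccompl (P : @Measure Ω mΩ) (X : Set (Ω → E)) (a : CondRaw Ω E) : CondRaw Ω E :=
  cSup P X {b | IsCond P X b ∧ cdisjoint P X b a}

open Classical in
/-- The largest measurable set (mod null sets) satisfying a property `Φ`,
obtained by an exhaustion argument; junk value `∅` if there is none. -/
def largestSet (P : @Measure Ω mΩ) (Φ : Set Ω → Prop) : Set Ω :=
  if h : ∃ C, MeasurableSet[mΩ] C ∧ Φ C ∧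
      ∀ C', MeasurableSet[mΩ] C' → Φ C' → P (C' \ C) = 0
  then h.choose else ∅

open Classical in
/-- The smallest measurable set (mod null sets) satisfying a property `Φ`. -/
def smallestSet (P : @Measure Ω mΩ) (Φ : Set Ω → Prop) : Set Ω :=
  if h : ∃ C, MeasurableSet[mΩ] C ∧ Φ C ∧
      ∀ C', MeasurableSet[mΩ] C' → Φ C' → P (C \ C') = 0
  then h.choose else univ

/-- Essential infimum `inf_i A_i` of a family of measurable sets in the measure algebra. -/
def essInfFam (P : @Measure Ω mΩ) {ι : Sort*} (A : ι → Set Ω) : Set Ω :=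
  largestSet P fun C => ∀ i, P (C \ A i) = 0

/-- Essential supremum `sup_i A_i` of a family of measurable sets in the measure algebra. -/
def essSupFam (P : @Measure Ω mΩ) {ι : Sort*} (A : ι → Set Ω) : Set Ω :=
  smallestSet P fun C => ∀ i, P (A i \ C) = 0

/-- A stable collection: a nonempty, `ceq`-saturated family of conditional subsets of `X`
closed under countable concatenations. -/
def IsStableColl (P : @Measure Ω mΩ) (X : Set (Ω → E)) (𝒞 : Set (CondRaw Ω E)) : Prop :=
  𝒞.Nonempty ∧ (∀ S ∈ 𝒞, IsCond P X S) ∧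
    (∀ S ∈ 𝒞, ∀ T, IsCond P X T → ceq P S T → T ∈ 𝒞) ∧
    ∀ (A : Partition mΩ P) (S : ℕ → CondRaw Ω E), (∀ k, S k ∈ 𝒞) → condConcat P A S ∈ 𝒞

/-- A stable σ-algebra on `X`. -/
def IsStableSigma (P : @Measure Ω mΩ) (X : Set (Ω → E)) (𝒳 : Set (CondRaw Ω E)) : Prop :=
  IsStableColl P X 𝒳 ∧ ctop X ∈ 𝒳 ∧ (∀ S ∈ 𝒳, ccompl P X S ∈ 𝒳) ∧
    ∀ S : ℕ → CondRaw Ω E, (∀ k, S k ∈ 𝒳) → cSupFam P X S ∈ 𝒳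

/-- A stable Dynkin system on `X`. -/
def IsStableDynkin (P : @Measure Ω mΩ) (X : Set (Ω → E)) (𝒟 : Set (CondRaw Ω E)) : Prop :=
  IsStableColl P X 𝒟 ∧ ctop X ∈ 𝒟 ∧ (∀ S ∈ 𝒟, ccompl P X S ∈ 𝒟) ∧
    ∀ S : ℕ → CondRaw Ω E, (∀ k, S k ∈ 𝒟) →
      (∀ i j, i ≠ j → cdisjoint P X (S i) (S j)) → cSupFam P X S ∈ 𝒟

/-- A stable ring on `X`. -/
def IsStableRing (P : @Measure Ω mΩ) (X : Set (Ω → E)) (𝒳 : Set (CondRaw Ω E)) : Prop :=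
  IsStableColl P X 𝒳 ∧
    ∀ S ∈ 𝒳, ∀ T ∈ 𝒳, cInf₂ P X S (ccompl P X T) ∈ 𝒳 ∧ cSup₂ P X S T ∈ 𝒳

/-- The stable σ-algebra generated by a collection `ℰ`. -/
def sigmaGen (P : @Measure Ω mΩ) (X : Set (Ω → E)) (ℰ : Set (CondRaw Ω E)) :
    Set (CondRaw Ω E) :=
  ⋂₀ {𝒳 | IsStableSigma P X 𝒳 ∧ ℰ ⊆ 𝒳}

/-- The stable Dynkin system generated by a collection `ℰ`. -/
def dynkinGen (P : @Measure Ω mΩ) (X : Set (Ω → E)) (ℰ : Set (CondRaw Ω E)) :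
    Set (CondRaw Ω E) :=
  ⋂₀ {𝒟 | IsStableDynkin P X 𝒟 ∧ ℰ ⊆ 𝒟}

/-! ### Stable set functions and stable measures -/

/-- A stable set function `μ : 𝒞 → L̄⁰₊` (represented by measurable representatives,
well defined modulo identification, and commuting with countable concatenations). -/
def IsStableSetFun (P : @Measure Ω mΩ) (𝒞 : Set (CondRaw Ω E))
    (μ : CondRaw Ω E → Ω → ℝ≥0∞) : Prop :=
  (∀ S ∈ 𝒞, Measurable[mΩ] (μ S)) ∧
    (∀ S ∈ 𝒞, ∀ T ∈ 𝒞, ceq P S T → μ S =ᵐ[P] μ T) ∧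
    ∀ (A : Partition mΩ P) (S : ℕ → CondRaw Ω E), (∀ k, S k ∈ 𝒞) →
      μ (condConcat P A S) =ᵐ[P] A.concat fun k => μ (S k)

/-- Property (M1): `μ(V|A) = μ(V|A)|A + 0|Aᶜ`. -/
def M1 (P : @Measure Ω mΩ) (𝒞 : Set (CondRaw Ω E)) (μ : CondRaw Ω E → Ω → ℝ≥0∞) : Prop :=
  ∀ S ∈ 𝒞, μ S =ᵐ[P] S.2.indicator (μ S)

/-- Property (M2): countable additivity on pairwise disjoint sequences whose
conditional union belongs to the domain. -/
def M2 (P : @Measure Ω mΩ) (X : Set (Ω → E)) (𝒳 : Set (CondRaw Ω E))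
    (μ : CondRaw Ω E → Ω → ℝ≥0∞) : Prop :=
  ∀ S : ℕ → CondRaw Ω E, (∀ k, S k ∈ 𝒳) →
    (∀ i j, i ≠ j → cdisjoint P X (S i) (S j)) → cSupFam P X S ∈ 𝒳 →
    μ (cSupFam P X S) =ᵐ[P] fun ω => ∑' k, μ (S k) ω

/-- Finite additivity: (M2) for finite pairwise disjoint families. -/
def FinAdd (P : @Measure Ω mΩ) (X : Set (Ω → E)) (𝒳 : Set (CondRaw Ω E))
    (μ : CondRaw Ω E → Ω → ℝ≥0∞) : Prop :=
  ∀ (n : ℕ) (S : Fin n → CondRaw Ω E), (∀ k, S k ∈ 𝒳) →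
    (∀ i j, i ≠ j → cdisjoint P X (S i) (S j)) → cSupFam P X S ∈ 𝒳 →
    μ (cSupFam P X S) =ᵐ[P] fun ω => ∑ k, μ (S k) ω

/-- A stable measure (or stable pre-measure, when the domain is merely a stable
ring): a stable set function satisfying (M1) and (M2). -/
def IsStableMeasureOn (P : @Measure Ω mΩ) (X : Set (Ω → E)) (𝒳 : Set (CondRaw Ω E))
    (μ : CondRaw Ω E → Ω → ℝ≥0∞) : Prop :=
  IsStableSetFun P 𝒳 μ ∧ M1 P 𝒳 μ ∧ M2 P X 𝒳 μ

/-- A finite stable measure. -/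
def IsFiniteStableMeasureOn (P : @Measure Ω mΩ) (X : Set (Ω → E))
    (𝒳 : Set (CondRaw Ω E)) (μ : CondRaw Ω E → Ω → ℝ≥0∞) : Prop :=
  IsStableMeasureOn P X 𝒳 μ ∧ ∀ᵐ ω ∂P, μ (ctop X) ω < ∞

/-- A stable probability measure. -/
def IsStableProbOn (P : @Measure Ω mΩ) (X : Set (Ω → E)) (𝒳 : Set (CondRaw Ω E))
    (μ : CondRaw Ω E → Ω → ℝ≥0∞) : Prop :=
  IsStableMeasureOn P X 𝒳 μ ∧ μ (ctop X) =ᵐ[P] fun _ => (1 : ℝ≥0∞)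

/-- A stable outer measure on the conditional power set of `X`. -/
def IsStableOuter (P : @Measure Ω mΩ) (X : Set (Ω → E))
    (μ : CondRaw Ω E → Ω → ℝ≥0∞) : Prop :=
  (∀ S, IsCond P X S → Measurable[mΩ] (μ S)) ∧
    (∀ S T, IsCond P X S → IsCond P X T → ceq P S T → μ S =ᵐ[P] μ T) ∧
    (∀ (A : Partition mΩ P) (S : ℕ → CondRaw Ω E), (∀ k, IsCond P X (S k)) →
      μ (condConcat P A S) =ᵐ[P] A.concat fun k => μ (S k)) ∧
    (∀ S, IsCond P X S → ∀ B, MeasurableSet[mΩ] B →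
      μ (crestrict S B) =ᵐ[P] B.indicator (μ S)) ∧
    (∀ S T, IsCond P X S → IsCond P X T → cle P S T → ∀ᵐ ω ∂P, μ S ω ≤ μ T ω) ∧
    ∀ S : ℕ → CondRaw Ω E, (∀ k, IsCond P X (S k)) →
      ∀ᵐ ω ∂P, μ (cSupFam P X S) ω ≤ ∑' k, μ (S k) ω

/-- Stable Carathéodory measurability with respect to a stable outer measure. -/
def CaraMeasurable (P : @Measure Ω mΩ) (X : Set (Ω → E))
    (μ : CondRaw Ω E → Ω → ℝ≥0∞) (S : CondRaw Ω E) : Prop :=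
  ∀ T, IsCond P X T →
    (fun ω => μ (cInf₂ P X T S) ω + μ (cInf₂ P X T (ccompl P X S)) ω) =ᵐ[P] μ T

/-! ### Stable functions, the stable Borel σ-algebra on `L⁰`, and the integral -/

/-- The stable set `L⁰_m(E)` of all (classes of) measurable functions `Ω → E`. -/
def l0m (P : @Measure Ω mΩ) (E : Type*) [MeasurableSpace E] : Set (Ω → E) :=
  {x | AEMeasurable x P}

/-- A stable function between stable sets of functions. -/
def StableFun (P : @Measure Ω mΩ) (X : Set (Ω → E)) (Y : Set (Ω → F'))
    (f : (Ω → E) → Ω → F') : Prop :=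
  (∀ x ∈ X, f x ∈ Y) ∧ (∀ x ∈ X, ∀ y ∈ X, x =ᵐ[P] y → f x =ᵐ[P] f y) ∧
    ∀ (A : Partition mΩ P) (x : ℕ → Ω → E), (∀ k, x k ∈ X) →
      f (A.concat x) =ᵐ[P] A.concat fun k => f (x k)

/-- The conditional preimage `f⁻¹(W|A)`. -/
def cPreimage (P : @Measure Ω mΩ) (X : Set (Ω → E)) (f : (Ω → E) → Ω → F')
    (W : CondRaw Ω F') : CondRaw Ω E :=
  ({x ∈ X | memOn P (largestSet P fun C => P (C \ W.2) = 0 ∧ ∃ x ∈ X, memOn P C (f x) W.1)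
      (f x) W.1},
    largestSet P fun C => P (C \ W.2) = 0 ∧ ∃ x ∈ X, memOn P C (f x) W.1)

/-- The stable Borel σ-algebra `B(L⁰)` on `L⁰`, generated by the stable open balls. -/
def borelL0 (P : @Measure Ω mΩ) : Set (CondRaw Ω ℝ) :=
  sigmaGen P (l0m P ℝ)
    {S | ∃ r ε : Ω → ℝ, AEMeasurable r P ∧ AEMeasurable ε P ∧ (∀ᵐ ω ∂P, 0 < ε ω) ∧
      ceq P S ({s | AEMeasurable s P ∧ ∀ᵐ ω ∂P, |s ω - r ω| < ε ω}, univ)}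

/-- A stably measurable function `f : X → L⁰` with respect to a stable σ-algebra `𝒳`. -/
def StablyMeasurable (P : @Measure Ω mΩ) (X : Set (Ω → E)) (𝒳 : Set (CondRaw Ω E))
    (f : (Ω → E) → Ω → ℝ) : Prop :=
  StableFun P X (l0m P ℝ) f ∧ ∀ W ∈ borelL0 P, cPreimage P X f W ∈ 𝒳

/-- The base set `A_x` of the stable indicator function of `S = V|A` at `x`. -/
def indBase (P : @Measure Ω mΩ) (S : CondRaw Ω E) (x : Ω → E) : Set Ω :=
  largestSet P fun C => P (C \ S.2) = 0 ∧ memOn P C x S.1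

/-- The stable indicator function `1_{V|A} : X → L⁰`. -/
def cIndicator (P : @Measure Ω mΩ) (S : CondRaw Ω E) (x : Ω → E) : Ω → ℝ :=
  (indBase P S x).indicator fun _ => (1 : ℝ)

/-- Data of a stable elementary function: coefficients and conditional sets. -/
def ElemRep (Ω E : Type*) := Σ n : ℕ, (Fin n → Ω → ℝ) × (Fin n → CondRaw Ω E)

/-- The function `∑_{k ≤ n} r_k 1_{V_k|A_k}` represented by `ρ`. -/
def repFun (P : @Measure Ω mΩ) (ρ : ElemRep Ω E) : (Ω → E) → Ω → ℝ :=
  fun x ω => ∑ k, ρ.2.1 k ω * cIndicator P (ρ.2.2 k) x ω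

/-- The representation `ρ` is admissible: nonnegative `L⁰`-coefficients and a finite
pairwise disjoint family in `𝒳` whose conditional union is `X`. -/
def GoodRep (P : @Measure Ω mΩ) (X : Set (Ω → E)) (𝒳 : Set (CondRaw Ω E))
    (ρ : ElemRep Ω E) : Prop :=
  (∀ k, AEMeasurable (ρ.2.1 k) P) ∧ (∀ k, ∀ᵐ ω ∂P, 0 ≤ ρ.2.1 k ω) ∧
    (∀ k, ρ.2.2 k ∈ 𝒳) ∧ (∀ i j, i ≠ j → cdisjoint P X (ρ.2.2 i) (ρ.2.2 j)) ∧
    ceq P (cSupFam P X ρ.2.2) (ctop X)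

/-- A stable elementary function. -/
def IsElementary (P : @Measure Ω mΩ) (X : Set (Ω → E)) (𝒳 : Set (CondRaw Ω E))
    (f : (Ω → E) → Ω → ℝ) : Prop :=
  ∃ ρ : ElemRep Ω E, GoodRep P X 𝒳 ρ ∧ ∀ x ∈ X, f x =ᵐ[P] repFun P ρ x

/-- The stable Lebesgue integral `∑_k r_k μ(V_k|A_k)` of the elementary representation. -/
def repInt (μ : CondRaw Ω E → Ω → ℝ≥0∞) (ρ : ElemRep Ω E) : Ω → ℝ≥0∞ :=
  fun ω => ∑ k, ENNReal.ofReal (ρ.2.1 k ω) * μ (ρ.2.2 k) ω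

/-- The stable Lebesgue integral of a nonnegative function, as the supremum of the
integrals of the dominated stable elementary functions. -/
def cIntNN (P : @Measure Ω mΩ) (X : Set (Ω → E)) (𝒳 : Set (CondRaw Ω E))
    (μ : CondRaw Ω E → Ω → ℝ≥0∞) (f : (Ω → E) → Ω → ℝ) : Ω → ℝ≥0∞ :=
  fun ω =>
    ⨆ ρ : {ρ : ElemRep Ω E // GoodRep P X 𝒳 ρ ∧
        ∀ x ∈ X, ∀ᵐ ω' ∂P, repFun P ρ x ω' ≤ f x ω'},
      repInt μ ρ.1 ω

/-- The positive part `f⁺` of an `L⁰`-valued function. -/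
def fplus (f : (Ω → E) → Ω → ℝ) : (Ω → E) → Ω → ℝ := fun x ω => max (f x ω) 0

/-- The negative part `f⁻` of an `L⁰`-valued function. -/
def fminus (f : (Ω → E) → Ω → ℝ) : (Ω → E) → Ω → ℝ := fun x ω => max (-(f x ω)) 0

/-- Stable integrability of `f : X → L⁰`. -/
def CIntegrable (P : @Measure Ω mΩ) (X : Set (Ω → E)) (𝒳 : Set (CondRaw Ω E))
    (μ : CondRaw Ω E → Ω → ℝ≥0∞) (f : (Ω → E) → Ω → ℝ) : Prop :=
  StablyMeasurable P X 𝒳 f ∧ (∀ᵐ ω ∂P, cIntNN P X 𝒳 μ (fplus f) ω < ∞) ∧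
    ∀ᵐ ω ∂P, cIntNN P X 𝒳 μ (fminus f) ω < ∞

/-- The stable Lebesgue integral `∫_X f dμ := ∫ f⁺ dμ − ∫ f⁻ dμ`. -/
def cInt (P : @Measure Ω mΩ) (X : Set (Ω → E)) (𝒳 : Set (CondRaw Ω E))
    (μ : CondRaw Ω E → Ω → ℝ≥0∞) (f : (Ω → E) → Ω → ℝ) : Ω → ℝ :=
  fun ω => (cIntNN P X 𝒳 μ (fplus f) ω).toReal - (cIntNN P X 𝒳 μ (fminus f) ω).toReal

/-! ### Products and sections -/

/-- The pairing `ω ↦ (x ω, y ω)`. -/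
def pairFn (x : Ω → E) (y : Ω → F') : Ω → E × F' := fun ω => (x ω, y ω)

/-- The Cartesian product `X × Y` of two stable sets, as a stable set of functions
`Ω → E × F'`. -/
def prodSet (P : @Measure Ω mΩ) (X : Set (Ω → E)) (Y : Set (Ω → F')) :
    Set (Ω → E × F') :=
  {z | ∃ x ∈ X, ∃ y ∈ Y, z =ᵐ[P] pairFn x y}

/-- The conditional rectangle `V|A × W|B := (V × W)|A ∩ B`. -/
def crect (P : @Measure Ω mΩ) (S : CondRaw Ω E) (T : CondRaw Ω F') :
    CondRaw Ω (E × F') :=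
  (prodSet P S.1 T.1, S.2 ∩ T.2)

/-- The stable product σ-algebra `𝒳 ⊗ 𝒴`, generated by the conditional rectangles. -/
def prodSigma (P : @Measure Ω mΩ) (X : Set (Ω → E)) (Y : Set (Ω → F'))
    (𝒳 : Set (CondRaw Ω E)) (𝒴 : Set (CondRaw Ω F')) : Set (CondRaw Ω (E × F')) :=
  sigmaGen P (prodSet P X Y) {R | ∃ S ∈ 𝒳, ∃ T ∈ 𝒴, ceq P R (crect P S T)}

/-- The conditional `x`-section `(Z|C)_x` of a conditional subset of `X × Y`. -/
def xsection (P : @Measure Ω mΩ) (Y : Set (Ω → F')) (Z : CondRaw Ω (E × F'))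
    (x : Ω → E) : CondRaw Ω F' :=
  ({y ∈ Y | memOn P (largestSet P fun D => P (D \ Z.2) = 0 ∧ ∃ y ∈ Y, memOn P D (pairFn x y) Z.1)
      (pairFn x y) Z.1},
    largestSet P fun D => P (D \ Z.2) = 0 ∧ ∃ y ∈ Y, memOn P D (pairFn x y) Z.1)

/-- The conditional `y`-section `(Z|C)_y` of a conditional subset of `X × Y`. -/
def ysection (P : @Measure Ω mΩ) (X : Set (Ω → E)) (Z : CondRaw Ω (E × F'))
    (y : Ω → F') : CondRaw Ω E :=
  ({x ∈ X | memOn P (largestSet P fun D => P (D \ Z.2) = 0 ∧ ∃ x ∈ X, memOn P D (pairFn x y) Z.1)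
      (pairFn x y) Z.1},
    largestSet P fun D => P (D \ Z.2) = 0 ∧ ∃ x ∈ X, memOn P D (pairFn x y) Z.1)

/-! ### Conditional subsets of `L⁰_m(E)` associated to measurable sets -/

/-- `L⁰_m(F) = {x ∈ L⁰_m(E) : x ∈ F a.s.}` for a measurable `F ⊆ E`. -/
def l0mF (P : @Measure Ω mΩ) {E : Type*} [MeasurableSpace E] (F : Set E) : Set (Ω → E) :=
  {x | AEMeasurable x P ∧ ∀ᵐ ω ∂P, x ω ∈ F}

/-- `∑ L⁰_m(F_k)|A_k = {x ∈ L⁰_m(E) : x ∈ F_k a.s. on A_k for all k}`. -/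
def l0mConcat (P : @Measure Ω mΩ) {E : Type*} [MeasurableSpace E]
    (A : Partition mΩ P) (F : ℕ → Set E) : Set (Ω → E) :=
  {x | AEMeasurable x P ∧ ∀ k, ∀ᵐ ω ∂P, ω ∈ A.part k → x ω ∈ F k}

/-- The stable ring `ℛ` on `L⁰_m(E)` generated by a measurable structure on `E`:
all conditional subsets of the form `(∑ L⁰_m(F_k)|A_k)|B`. -/
def ringR (P : @Measure Ω mΩ) (E : Type*) [MeasurableSpace E] : Set (CondRaw Ω E) :=
  {S | ∃ (F : ℕ → Set E) (A : Partition mΩ P) (B : Set Ω),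
    (∀ k, MeasurableSet (F k)) ∧ MeasurableSet[mΩ] B ∧
      ceq P S (l0mConcat P A F, B)}

end CondMT

namespace CondMT

section Helpers

variable {Ω E : Type*} {mΩ : MeasurableSpace Ω} {P : @Measure Ω mΩ} {X : Set (Ω → E)}

lemma null_iff (C D : Set Ω) : P (C \ D) = 0 ↔ ∀ᵐ ω ∂P, ω ∈ C → ω ∈ D := by
  rw [ae_iff]
  have : {ω | ¬(ω ∈ C → ω ∈ D)} = C \ D := by
    ext ω; simp
  rw [this]

lemma exists_largest [IsProbabilityMeasure P] (Φ : Set Ω → Prop) (h0 : Φ ∅)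
    (hU : ∀ C : ℕ → Set Ω, (∀ k, MeasurableSet (C k)) → (∀ k, Φ (C k)) → Φ (⋃ k, C k)) :
    ∃ C, MeasurableSet[mΩ] C ∧ Φ C ∧ ∀ C', MeasurableSet[mΩ] C' → Φ C' → P (C' \ C) = 0 := by
  let s : Set ℝ≥0∞ := P '' {C | MeasurableSet C ∧ Φ C}
  have hs : s.Nonempty := ⟨P ∅, ∅, ⟨MeasurableSet.empty, h0⟩, rfl⟩
  obtain ⟨u, -, hu, hus⟩ := exists_seq_tendsto_sSup hs (OrderTop.bddAbove s)
  choose C hC hCu using hus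
  have hm : MeasurableSet (⋃ k, C k) := MeasurableSet.iUnion fun k => (hC k).1
  have hΦ : Φ (⋃ k, C k) := hU C (fun k => (hC k).1) (fun k => (hC k).2)
  refine ⟨⋃ k, C k, hm, hΦ, fun C' hC'm hC' => ?_⟩
  have h1 : sSup s ≤ P (⋃ k, C k) := by
    refine le_of_tendsto' hu fun k => ?_
    rw [← hCu k]
    exact measure_mono (subset_iUnion C k)
  have h2 : MeasurableSet ((⋃ k, C k) ∪ C') ∧ Φ ((⋃ k, C k) ∪ C') := by
    refine ⟨hm.union hC'm, ?_⟩
    let D : ℕ → Set Ω := fun n => if n = 0 then C' else ⋃ k, C k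
    have hD : (⋃ k, C k) ∪ C' = ⋃ n, D n := by
      ext ω
      simp only [mem_union, mem_iUnion]
      constructor
      · rintro (h | h)
        · exact ⟨1, by simpa [D] using h⟩
        · exact ⟨0, by simpa [D] using h⟩
      · rintro ⟨n, hn⟩
        by_cases h : n = 0
        · right; simpa [D, h] using hn
        · left; simpa [D, h] using hn
    rw [hD]
    apply hU
    · intro n; by_cases h : n = 0 <;> simp [D, h, hC'm, hm]
    · intro n
      by_cases h : n = 0
      · simpa [D, h] using hC'
      · simpa [D, h] using hΦ
  have h3 : P ((⋃ k, C k) ∪ C') ≤ sSup s := le_sSup ⟨_, h2, rfl⟩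
  have h4 : P ((⋃ k, C k) ∪ C') = P (⋃ k, C k) + P (C' \ ⋃ k, C k) := by
    rw [← measure_union disjoint_sdiff_right (hC'm.diff hm), union_sdiff_self]
  rw [h4] at h3
  have h5 : P (⋃ k, C k) + P (C' \ ⋃ k, C k) ≤ P (⋃ k, C k) + 0 := by
    simpa using h3.trans h1
  exact le_antisymm ((ENNReal.add_le_add_iff_left (measure_ne_top P _)).1 h5) bot_le

lemma concat_of_first (B : Partition mΩ P) (x : ℕ → Ω → E) (k : ℕ) (ω : Ω)
    (hk : ω ∈ B.part k) (hlt : ∀ n < k, ω ∉ B.part n) : B.concat x ω = x k ω := by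
  classical
  have h : ∃ n, ω ∈ B.part n := ⟨k, hk⟩
  have hf : Nat.find h = k := by
    rw [Nat.find_eq_iff]
    exact ⟨hk, hlt⟩
  unfold Partition.concat
  rw [dif_pos h]
  simp only [hf]

/-- Gluing of a sequence in a stable set along a sequence of measurable sets. -/
lemma glue {V : Set (Ω → E)} (hV : Stable P V) (D : ℕ → Set Ω)
    (hD : ∀ k, MeasurableSet (D k)) (y : ℕ → Ω → E) (hy : ∀ k, y k ∈ V) :
    ∃ z ∈ V, ∀ k, ∀ ω ∈ disjointed D k, z ω = y k ω := by
  classical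
  let A : Partition mΩ P :=
    { part := fun n => Nat.casesOn n (⋃ k, D k)ᶜ (fun k => disjointed D k)
      meas := by
        rintro (_ | k)
        · exact (MeasurableSet.iUnion hD).compl
        · exact MeasurableSet.disjointed hD k
      disj := by
        have key : ∀ k ω, ω ∈ disjointed D k → ω ∈ ⋃ k, D k := fun k ω h =>
          mem_iUnion.2 ⟨k, disjointed_subset D k h⟩
        rintro (_ | i) (_ | j) hij
        · exact absurd rfl hij
        · convert measure_empty (μ := P)
          ext ω; simp only [mem_inter_iff, mem_empty_iff_false, iff_false]
          exact fun h => h.1 (key j ω h.2)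
        · convert measure_empty (μ := P)
          ext ω; simp only [mem_inter_iff, mem_empty_iff_false, iff_false]
          exact fun h => h.2 (key i ω h.1)
        · have : Disjoint (disjointed D i) (disjointed D j) :=
            disjoint_disjointed D (fun h => hij (by rw [h]))
          change P (disjointed D i ∩ disjointed D j) = 0
          rw [this.inter_eq, measure_empty]
      cover := by
        convert measure_empty (μ := P)
        ext ω
        simp only [mem_compl_iff, mem_iUnion, mem_empty_iff_false, iff_false, not_not]
        by_cases h : ω ∈ ⋃ k, D k
        · rw [← iUnion_disjointed] at h
          obtain ⟨k, hk⟩ := mem_iUnion.1 h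
          exact ⟨k + 1, hk⟩
        · exact ⟨0, h⟩ }
  let y' : ℕ → Ω → E := fun n => Nat.casesOn n (y 0) y
  refine ⟨A.concat y', hV.2.2 A y' ?_, ?_⟩
  · rintro (_ | k)
    · exact hy 0
    · exact hy k
  · intro k ω hω
    refine concat_of_first A y' (k + 1) ω hω ?_
    rintro (_ | n) hn hs
    · exact hs (mem_iUnion.2 ⟨k, disjointed_subset D k hω⟩)
    · have hd : Disjoint (disjointed D n) (disjointed D k) :=
        disjoint_disjointed D (by omega)
      exact Set.disjoint_left.1 hd hs hω

lemma memOn_iUnion {V : Set (Ω → E)} (hV : Stable P V) (D : ℕ → Set Ω)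
    (hD : ∀ k, MeasurableSet (D k)) (x : Ω → E) (h : ∀ k, memOn P (D k) x V) :
    memOn P (⋃ k, D k) x V := by
  choose y hy hxy using h
  obtain ⟨z, hz, hzy⟩ := glue hV D hD y hy
  refine ⟨z, hz, ?_⟩
  filter_upwards [ae_all_iff.2 hxy] with ω hω hmem
  rw [← iUnion_disjointed] at hmem
  obtain ⟨k, hk⟩ := mem_iUnion.1 hmem
  rw [hzy k ω hk]
  exact hω k (disjointed_subset D k hk)

/-- `indBase` really is the largest set. -/
lemma indBase_spec [IsProbabilityMeasure P] {S : CondRaw Ω E} (hS : IsCond P X S) (x : Ω → E) :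
    MeasurableSet[mΩ] (indBase P S x) ∧
      (P (indBase P S x \ S.2) = 0 ∧ memOn P (indBase P S x) x S.1) ∧
      ∀ C', MeasurableSet[mΩ] C' → (P (C' \ S.2) = 0 ∧ memOn P C' x S.1) →
        P (C' \ indBase P S x) = 0 := by
  have h : ∃ C, MeasurableSet[mΩ] C ∧ (P (C \ S.2) = 0 ∧ memOn P C x S.1) ∧
      ∀ C', MeasurableSet[mΩ] C' → (P (C' \ S.2) = 0 ∧ memOn P C' x S.1) → P (C' \ C) = 0 := by
    apply exists_largest (P := P) (fun C => P (C \ S.2) = 0 ∧ memOn P C x S.1)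
    · obtain ⟨v, hv⟩ := hS.1.1
      exact ⟨by simp, v, hv, by simp⟩
    · intro C hC hΦ
      refine ⟨?_, memOn_iUnion hS.1 C hC x fun k => (hΦ k).2⟩
      rw [iUnion_sdiff]
      exact measure_iUnion_null fun k => (hΦ k).1
  have : indBase P S x = h.choose := by
    unfold indBase largestSet
    exact dif_pos h
  rw [this]
  exact h.choose_spec

lemma indBase_local [IsProbabilityMeasure P] {S : CondRaw Ω E} (hS : IsCond P X S)
    {x y : Ω → E} {C : Set Ω} (hC : MeasurableSet C) (hxy : ∀ᵐ ω ∂P, ω ∈ C → x ω = y ω) :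
    ∀ᵐ ω ∂P, ω ∈ C → ω ∈ indBase P S x → ω ∈ indBase P S y := by
  obtain ⟨hm, ⟨h1, v, hv, h2⟩, -⟩ := indBase_spec hS x
  have h := (indBase_spec hS y).2.2 (C ∩ indBase P S x) (hC.inter hm) ⟨?_, v, hv, ?_⟩
  · rw [null_iff] at h
    filter_upwards [h] with ω hω a b using hω ⟨a, b⟩
  · rw [null_iff] at h1 ⊢
    filter_upwards [h1] with ω hω a using hω a.2
  · filter_upwards [h2, hxy] with ω a b c
    rw [← b c.1, a c.2]

lemma cle_iff [IsProbabilityMeasure P] {S T : CondRaw Ω E} (hS : IsCond P X S)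
    (hT : IsCond P X T) :
    cle P S T ↔ ∀ x ∈ X, ∀ᵐ ω ∂P, ω ∈ indBase P S x → ω ∈ indBase P T x := by
  constructor
  · rintro ⟨h1, h2⟩ x -
    obtain ⟨hm, ⟨h3, v, hv, h4⟩, -⟩ := indBase_spec hS x
    rw [← null_iff]
    obtain ⟨w, hw, h5⟩ := h2 v hv
    rw [null_iff] at h1 h3
    refine (indBase_spec hT x).2.2 _ hm ⟨?_, w, hw, ?_⟩
    · rw [null_iff]
      filter_upwards [h1, h3] with ω a b c using a (b c)
    · filter_upwards [h3, h4, h5] with ω a b c d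
      rw [b d, c (a d)]
  · intro h
    have key : ∀ x ∈ S.1, ∀ᵐ ω ∂P, ω ∈ S.2 → ω ∈ indBase P T x := by
      intro x hx
      have h1 := (indBase_spec hS x).2.2 S.2 hS.2.2 ⟨by simp, x, hx, by simp⟩
      rw [null_iff] at h1
      filter_upwards [h1, h x (hS.2.1 hx)] with ω a b c using b (a c)
    constructor
    · obtain ⟨x, hx⟩ := hS.1.1
      have h2 := (indBase_spec hT x).2.1.1
      rw [null_iff] at h2 ⊢
      filter_upwards [key x hx, h2] with ω a b c using b (a c)
    · intro x hx
      obtain ⟨w, hw, h3⟩ := (indBase_spec hT x).2.1.2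
      refine ⟨w, hw, ?_⟩
      filter_upwards [key x hx, h3] with ω a b c using b (a c)

lemma ceq_iff [IsProbabilityMeasure P] {S T : CondRaw Ω E} (hS : IsCond P X S)
    (hT : IsCond P X T) :
    ceq P S T ↔ ∀ x ∈ X, ∀ᵐ ω ∂P, ω ∈ indBase P S x ↔ ω ∈ indBase P T x := by
  unfold ceq
  rw [cle_iff hS hT, cle_iff hT hS]
  constructor
  · rintro ⟨h1, h2⟩ x hx
    filter_upwards [h1 x hx, h2 x hx] with ω a b using ⟨a, b⟩
  · intro h
    exact ⟨fun x hx => (h x hx).mono fun ω a => a.1, fun x hx => (h x hx).mono fun ω a => a.2⟩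

/-- Realization of a local family of measurable sets by a conditional subset. -/
lemma realize [IsProbabilityMeasure P] (hX : Stable P X) (e : (Ω → E) → Set Ω)
    (hem : ∀ x ∈ X, MeasurableSet (e x))
    (hloc : ∀ x ∈ X, ∀ y ∈ X, ∀ C, MeasurableSet C → (∀ᵐ ω ∂P, ω ∈ C → x ω = y ω) →
      ∀ᵐ ω ∂P, ω ∈ C → ω ∈ e x → ω ∈ e y) :
    ∃ S, IsCond P X S ∧ ∀ x ∈ X, ∀ᵐ ω ∂P, ω ∈ indBase P S x ↔ ω ∈ e x := by
  -- gluing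
  have hglue : ∀ (C : ℕ → Set Ω), (∀ k, MeasurableSet (C k)) → ∀ x : ℕ → Ω → E,
      (∀ k, x k ∈ X) → (∀ k, ∀ᵐ ω ∂P, ω ∈ C k → ω ∈ e (x k)) →
      ∃ z ∈ X, (∀ k, ∀ ω ∈ disjointed C k, z ω = x k ω) ∧
        ∀ᵐ ω ∂P, ω ∈ ⋃ k, C k → ω ∈ e z := by
    intro C hC x hx h
    obtain ⟨z, hz, hzx⟩ := glue hX C hC x hx
    refine ⟨z, hz, hzx, ?_⟩
    have h1 : ∀ k, ∀ᵐ ω ∂P, ω ∈ disjointed C k → ω ∈ e (x k) → ω ∈ e z := fun k =>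
      hloc (x k) (hx k) z hz _ (MeasurableSet.disjointed hC k)
        (ae_of_all _ fun ω hω => (hzx k ω hω).symm)
    filter_upwards [ae_all_iff.2 h, ae_all_iff.2 h1] with ω a b hmem
    rw [← iUnion_disjointed] at hmem
    obtain ⟨k, hk⟩ := mem_iUnion.1 hmem
    exact b k hk (a k (disjointed_subset C k hk))
  obtain ⟨A, hA, ⟨x0, hx0, hAx0⟩, hmax⟩ := exists_largest (P := P)
    (fun C => ∃ x ∈ X, ∀ᵐ ω ∂P, ω ∈ C → ω ∈ e x)
    (by obtain ⟨v, hv⟩ := hX.1; exact ⟨v, hv, by simp⟩)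
    (by
      intro C hC h
      choose x hx h using h
      obtain ⟨z, hz, -, h'⟩ := hglue C hC x hx h
      exact ⟨z, hz, h'⟩)
  have hS : IsCond P X ({x ∈ X | ∀ᵐ ω ∂P, ω ∈ A → ω ∈ e x}, A) := by
    refine ⟨⟨⟨x0, hx0, hAx0⟩, ?_, ?_⟩, fun x hx => hx.1, hA⟩
    · rintro x ⟨hx, hxA⟩ y hxy
      have hy := hX.2.1 x hx y hxy
      refine ⟨hy, ?_⟩
      filter_upwards [hxA, hloc x hx y hy univ MeasurableSet.univ
        (hxy.mono fun ω a _ => a)] with ω a b c using b trivial (a c)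
    · classical
      intro B x hx
      have hz := hX.2.2 B x fun k => (hx k).1
      refine ⟨hz, ?_⟩
      -- on part k \ earlier parts, concat = x k
      have hc : ∀ k, ∀ ω ∈ disjointed B.part k, B.concat x ω = x k ω := by
        intro k ω hω
        have hk : ω ∈ B.part k := disjointed_subset _ k hω
        have h : ∃ n, ω ∈ B.part n := ⟨k, hk⟩
        have hf : Nat.find h = k := by
          rw [Nat.find_eq_iff]
          refine ⟨hk, fun n hn hmem => ?_⟩
          rw [disjointed_apply] at hω
          refine hω.2 ?_
          simp only [Finset.sup_eq_iSup, Finset.mem_Iio, iSup_eq_iUnion, mem_iUnion]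
          exact ⟨n, by simpa using hn, hmem⟩
        unfold Partition.concat
        rw [dif_pos h]
        simp only [hf]
      have h1 : ∀ k, ∀ᵐ ω ∂P, ω ∈ disjointed B.part k → ω ∈ e (x k) → ω ∈ e (B.concat x) :=
        fun k => hloc (x k) (hx k).1 _ hz _ (MeasurableSet.disjointed B.meas k)
          (ae_of_all _ fun ω hω => (hc k ω hω).symm)
      have hcov : ∀ᵐ ω ∂P, ω ∈ ⋃ k, B.part k := B.cover
      filter_upwards [ae_all_iff.2 h1, ae_all_iff.2 fun k => (hx k).2, hcov] with ω a b c d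
      rw [← iUnion_disjointed] at c
      obtain ⟨k, hk⟩ := mem_iUnion.1 c
      exact a k hk (b k d)
  refine ⟨_, hS, fun x hx => ?_⟩
  obtain ⟨hm, ⟨h1, v, hv, h2⟩, h3⟩ := indBase_spec hS x
  have hle : ∀ᵐ ω ∂P, ω ∈ e x → ω ∈ A := by
    rw [← null_iff]
    exact hmax _ (hem x hx) ⟨x, hx, ae_of_all _ fun ω a => a⟩
  have hge : P (e x \ indBase P ({x ∈ X | ∀ᵐ ω ∂P, ω ∈ A → ω ∈ e x}, A) x) = 0 := by
    apply h3 _ (hem x hx)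
    refine ⟨by rwa [null_iff], ?_⟩
    let C : ℕ → Set Ω := fun n => if n = 0 then e x else A
    let y : ℕ → Ω → E := fun n => if n = 0 then x else x0
    obtain ⟨z, hz, hzx, hzA⟩ := hglue C
      (by intro k; by_cases h : k = 0 <;> simp [C, h, hA, hem x hx]) y
      (by intro k; by_cases h : k = 0 <;> simp [y, h, hx, hx0])
      (by
        intro k
        by_cases h : k = 0
        · simp [C, y, h]
        · simpa [C, y, h] using hAx0)
    refine ⟨z, ⟨hz, ?_⟩, ?_⟩
    · filter_upwards [hzA] with ω a b
      exact a (mem_iUnion.2 ⟨1, by simpa [C] using b⟩)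
    · refine ae_of_all _ fun ω hω => ?_
      have := hzx 0 ω (by rw [disjointed_zero]; simpa [C] using hω)
      simpa [y] using this.symm
  rw [null_iff] at hge h1
  have h4 := hloc v hv.1 x hx _ hm (h2.mono fun ω a b => (a b).symm)
  filter_upwards [h1, h4, hge, hv.2] with ω a b c d
  exact ⟨fun h => b h (d (a h)), c⟩

lemma IsSupOf.ceq {s : Set (CondRaw Ω E)} {a b : CondRaw Ω E} (ha : IsSupOf P X s a)
    (hb : IsSupOf P X s b) : ceq P a b :=
  ⟨ha.2.2 b hb.1 hb.2.1, hb.2.2 a ha.1 ha.2.1⟩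

lemma IsInfOf.ceq {s : Set (CondRaw Ω E)} {a b : CondRaw Ω E} (ha : IsInfOf P X s a)
    (hb : IsInfOf P X s b) : ceq P a b :=
  ⟨hb.2.2 a ha.1 ha.2.1, ha.2.2 b hb.1 hb.2.1⟩

lemma cSup_isSupOf {s : Set (CondRaw Ω E)} {a : CondRaw Ω E} (ha : IsSupOf P X s a) :
    IsSupOf P X s (cSup P X s) := by
  have h : ∃ a, IsSupOf P X s a := ⟨a, ha⟩
  unfold cSup
  rw [dif_pos h]
  exact h.choose_spec

lemma cInf_isInfOf {s : Set (CondRaw Ω E)} {a : CondRaw Ω E} (ha : IsInfOf P X s a) :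
    IsInfOf P X s (cInf P X s) := by
  have h : ∃ a, IsInfOf P X s a := ⟨a, ha⟩
  unfold cInf
  rw [dif_pos h]
  exact h.choose_spec

variable [IsProbabilityMeasure P]

lemma cSupFam_spec (hX : Stable P X) {ι : Type*} [Countable ι] (S : ι → CondRaw Ω E)
    (hS : ∀ i, IsCond P X (S i)) :
    IsCond P X (cSupFam P X S) ∧
      ∀ x ∈ X, ∀ᵐ ω ∂P, ω ∈ indBase P (cSupFam P X S) x ↔ ∃ i, ω ∈ indBase P (S i) x := by
  obtain ⟨a, ha, hae⟩ := realize hX (fun x => ⋃ i, indBase P (S i) x)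
    (fun x _ => MeasurableSet.iUnion fun i => (indBase_spec (hS i) x).1) (by
      intro x hx y hy C hC hxy
      filter_upwards [ae_all_iff.2 fun i => indBase_local (hS i) hC hxy] with ω h hωC hω
      obtain ⟨i, hi⟩ := mem_iUnion.1 hω
      exact mem_iUnion.2 ⟨i, h i hωC hi⟩)
  have hsup : IsSupOf P X (range S) a := by
    refine ⟨ha, ?_, ?_⟩
    · rintro _ ⟨i, rfl⟩
      rw [cle_iff (hS i) ha]
      intro x hx
      filter_upwards [hae x hx] with ω h h'
      exact h.2 (mem_iUnion.2 ⟨i, h'⟩)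
    · intro c hc hub
      rw [cle_iff ha hc]
      intro x hx
      have h1 : ∀ i, ∀ᵐ ω ∂P, ω ∈ indBase P (S i) x → ω ∈ indBase P c x := fun i =>
        (cle_iff (hS i) hc).1 (hub _ ⟨i, rfl⟩) x hx
      filter_upwards [hae x hx, ae_all_iff.2 h1] with ω h h2 h3
      obtain ⟨i, hi⟩ := mem_iUnion.1 (h.1 h3)
      exact h2 i hi
  have hs := cSup_isSupOf hsup
  refine ⟨hs.1, fun x hx => ?_⟩
  filter_upwards [hae x hx, (ceq_iff hs.1 ha).1 (hs.ceq hsup) x hx] with ω h1 h2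
  exact (h2.trans h1).trans mem_iUnion

lemma cInfFam_spec (hX : Stable P X) {ι : Type*} [Countable ι] (S : ι → CondRaw Ω E)
    (hS : ∀ i, IsCond P X (S i)) :
    IsCond P X (cInfFam P X S) ∧
      ∀ x ∈ X, ∀ᵐ ω ∂P, ω ∈ indBase P (cInfFam P X S) x ↔ ∀ i, ω ∈ indBase P (S i) x := by
  obtain ⟨a, ha, hae⟩ := realize hX (fun x => ⋂ i, indBase P (S i) x)
    (fun x _ => MeasurableSet.iInter fun i => (indBase_spec (hS i) x).1) (by
      intro x hx y hy C hC hxy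
      filter_upwards [ae_all_iff.2 fun i => indBase_local (hS i) hC hxy] with ω h hωC hω
      exact mem_iInter.2 fun i => h i hωC (mem_iInter.1 hω i))
  have hinf : IsInfOf P X (range S) a := by
    refine ⟨ha, ?_, ?_⟩
    · rintro _ ⟨i, rfl⟩
      rw [cle_iff ha (hS i)]
      intro x hx
      filter_upwards [hae x hx] with ω h h'
      exact mem_iInter.1 (h.1 h') i
    · intro c hc hub
      rw [cle_iff hc ha]
      intro x hx
      have h1 : ∀ i, ∀ᵐ ω ∂P, ω ∈ indBase P c x → ω ∈ indBase P (S i) x := fun i =>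
        (cle_iff hc (hS i)).1 (hub _ ⟨i, rfl⟩) x hx
      filter_upwards [hae x hx, ae_all_iff.2 h1] with ω h h2 h3
      exact h.2 (mem_iInter.2 fun i => h2 i h3)
  have hs := cInf_isInfOf hinf
  refine ⟨hs.1, fun x hx => ?_⟩
  filter_upwards [hae x hx, (ceq_iff hs.1 ha).1 (hs.ceq hinf) x hx] with ω h1 h2
  exact (h2.trans h1).trans mem_iInter

lemma cSup₂_eq (S T : CondRaw Ω E) : cSup₂ P X S T = cSupFam P X ![S, T] := by
  unfold cSup₂ cSupFam
  congr 1
  rw [Matrix.range_cons, Matrix.range_cons, Matrix.range_empty, Set.union_empty]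
  rfl

lemma cInf₂_eq (S T : CondRaw Ω E) : cInf₂ P X S T = cInfFam P X ![S, T] := by
  unfold cInf₂ cInfFam
  congr 1
  rw [Matrix.range_cons, Matrix.range_cons, Matrix.range_empty, Set.union_empty]
  rfl

lemma cSup₂_spec (hX : Stable P X) {S T : CondRaw Ω E} (hS : IsCond P X S) (hT : IsCond P X T) :
    IsCond P X (cSup₂ P X S T) ∧
      ∀ x ∈ X, ∀ᵐ ω ∂P, ω ∈ indBase P (cSup₂ P X S T) x ↔
        (ω ∈ indBase P S x ∨ ω ∈ indBase P T x) := by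
  rw [cSup₂_eq]
  have h := cSupFam_spec hX ![S, T] (by intro i; fin_cases i <;> simpa)
  simpa [Fin.exists_fin_two] using h

lemma cInf₂_spec (hX : Stable P X) {S T : CondRaw Ω E} (hS : IsCond P X S) (hT : IsCond P X T) :
    IsCond P X (cInf₂ P X S T) ∧
      ∀ x ∈ X, ∀ᵐ ω ∂P, ω ∈ indBase P (cInf₂ P X S T) x ↔
        (ω ∈ indBase P S x ∧ ω ∈ indBase P T x) := by
  rw [cInf₂_eq]
  have h := cInfFam_spec hX ![S, T] (by intro i; fin_cases i <;> simpa)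
  simpa [Fin.forall_fin_two] using h

lemma cbot_spec (hX : Stable P X) :
    IsCond P X (cbot X) ∧ ∀ x : Ω → E, ∀ᵐ ω ∂P, ω ∉ indBase P (cbot X) x := by
  have h : IsCond P X (cbot X) := ⟨hX, Subset.rfl, MeasurableSet.empty⟩
  refine ⟨h, fun x => ?_⟩
  have h1 := (indBase_spec h x).2.1.1
  rw [null_iff] at h1
  exact h1

lemma cdisjoint_iff (hX : Stable P X) {S T : CondRaw Ω E} (hS : IsCond P X S)
    (hT : IsCond P X T) :
    cdisjoint P X S T ↔
      ∀ x ∈ X, ∀ᵐ ω ∂P, ¬ (ω ∈ indBase P S x ∧ ω ∈ indBase P T x) := by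
  unfold cdisjoint
  obtain ⟨h1, h2⟩ := cInf₂_spec hX hS hT
  obtain ⟨h3, h4⟩ := cbot_spec hX
  rw [ceq_iff h1 h3]
  refine forall₂_congr fun x hx => ?_
  refine eventually_congr ?_
  filter_upwards [h2 x hx, h4 x] with ω a b
  tauto

lemma ccompl_spec (hX : Stable P X) {S : CondRaw Ω E} (hS : IsCond P X S) :
    IsCond P X (ccompl P X S) ∧
      ∀ x ∈ X, ∀ᵐ ω ∂P, ω ∈ indBase P (ccompl P X S) x ↔ ω ∉ indBase P S x := by
  obtain ⟨a, ha, hae⟩ := realize hX (fun x => (indBase P S x)ᶜ)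
    (fun x _ => (indBase_spec hS x).1.compl) (by
      intro x hx y hy C hC hxy
      filter_upwards [indBase_local hS hC (hxy.mono fun ω a b => (a b).symm)] with ω h hωC hω h'
      exact hω (h hωC h'))
  have hsup : IsSupOf P X {b | IsCond P X b ∧ cdisjoint P X b S} a := by
    refine ⟨ha, ?_, ?_⟩
    · rintro b ⟨hb, hd⟩
      rw [cdisjoint_iff hX hb hS] at hd
      rw [cle_iff hb ha]
      intro x hx
      filter_upwards [hae x hx, hd x hx] with ω h h' h''
      exact h.2 fun h3 => h' ⟨h'', h3⟩
    · intro c hc hub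
      refine hub a ⟨ha, ?_⟩
      rw [cdisjoint_iff hX ha hS]
      intro x hx
      filter_upwards [hae x hx] with ω h h'
      exact h.1 h'.1 h'.2
  have hs := cSup_isSupOf hsup
  refine ⟨hs.1, fun x hx => ?_⟩
  filter_upwards [hae x hx, (ceq_iff hs.1 ha).1 (hs.ceq hsup) x hx] with ω h1 h2
  exact h2.trans h1

lemma cdiff_spec (hX : Stable P X) {S T : CondRaw Ω E} (hS : IsCond P X S) (hT : IsCond P X T) :
    IsCond P X (cInf₂ P X S (ccompl P X T)) ∧
      ∀ x ∈ X, ∀ᵐ ω ∂P, ω ∈ indBase P (cInf₂ P X S (ccompl P X T)) x ↔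
        (ω ∈ indBase P S x ∧ ω ∉ indBase P T x) := by
  obtain ⟨h1, h2⟩ := ccompl_spec hX hT
  obtain ⟨h3, h4⟩ := cInf₂_spec hX hS h1
  refine ⟨h3, fun x hx => ?_⟩
  filter_upwards [h2 x hx, h4 x hx] with ω a b
  tauto

end Helpers

set_option maxHeartbeats 2000000 in
/-- **Proposition 3.8 (M3)–(M8).**  Elementary properties of stable set functions
on a stable ring `𝒳` satisfying (M1) and finite additivity:

* (M3) `μ(V|A ⊔ W|B) + μ(V|A ⊓ W|B) = μ(V|A) + μ(W|B)`;
* (M4) monotonicity with respect to conditional inclusion;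
* (M5) `μ(W|B ⊓ (V|A)^⊏) = μ(W|B) − μ(V|A)` when `V|A ⊑ W|B` and `μ(V|A) < ∞`;
* (M6) countable subadditivity for stable pre-measures;
* (M7) `μ` is a stable pre-measure iff it is continuous from below;
* (M8) if `μ` is finite-valued, `μ` is a stable pre-measure iff it is continuous
  from above. -/
theorem stable_premeasure_props
    {Ω E : Type*} {mΩ : MeasurableSpace Ω} (P : @Measure Ω mΩ)
    [IsProbabilityMeasure P] (X : Set (Ω → E)) (hX : Stable P X)
    (𝒳 : Set (CondRaw Ω E)) (hring : IsStableRing P X 𝒳)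
    (μ : CondRaw Ω E → Ω → ℝ≥0∞) (hsf : IsStableSetFun P 𝒳 μ)
    (hM1 : M1 P 𝒳 μ) (hadd : FinAdd P X 𝒳 μ) :
    -- (M3)
    (∀ S ∈ 𝒳, ∀ T ∈ 𝒳,
      (fun ω => μ (cSup₂ P X S T) ω + μ (cInf₂ P X S T) ω) =ᵐ[P]
        fun ω => μ S ω + μ T ω) ∧
    -- (M4)
    (∀ S ∈ 𝒳, ∀ T ∈ 𝒳, cle P S T → ∀ᵐ ω ∂P, μ S ω ≤ μ T ω) ∧
    -- (M5)
    (∀ S ∈ 𝒳, ∀ T ∈ 𝒳, cle P S T → (∀ᵐ ω ∂P, μ S ω < ∞) →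
      μ (cInf₂ P X T (ccompl P X S)) =ᵐ[P] fun ω => μ T ω - μ S ω) ∧
    -- (M6)
    (M2 P X 𝒳 μ →
      ∀ S : ℕ → CondRaw Ω E, (∀ k, S k ∈ 𝒳) → cSupFam P X S ∈ 𝒳 →
        ∀ᵐ ω ∂P, μ (cSupFam P X S) ω ≤ ∑' k, μ (S k) ω) ∧
    -- (M7)
    (M2 P X 𝒳 μ ↔
      ∀ S : ℕ → CondRaw Ω E, (∀ k, S k ∈ 𝒳) → (∀ k, cle P (S k) (S (k + 1))) →
        cSupFam P X S ∈ 𝒳 →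
        μ (cSupFam P X S) =ᵐ[P] fun ω => ⨆ k, μ (S k) ω) ∧
    -- (M8)
    ((∀ S ∈ 𝒳, ∀ᵐ ω ∂P, μ S ω < ∞) →
      (M2 P X 𝒳 μ ↔
        ∀ S : ℕ → CondRaw Ω E, (∀ k, S k ∈ 𝒳) → (∀ k, cle P (S (k + 1)) (S k)) →
          cInfFam P X S ∈ 𝒳 →
          μ (cInfFam P X S) =ᵐ[P] fun ω => ⨅ k, μ (S k) ω)) := by
  obtain ⟨⟨-, hc, hsat, -⟩, hr⟩ := hring
  obtain ⟨-, hcongr, -⟩ := hsf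
  -- saturation and congruence in terms of `indBase`
  have sat : ∀ S ∈ 𝒳, ∀ T, IsCond P X T →
      (∀ x ∈ X, ∀ᵐ ω ∂P, ω ∈ indBase P S x ↔ ω ∈ indBase P T x) → T ∈ 𝒳 :=
    fun S hS T hT h => hsat S hS T hT ((ceq_iff (hc S hS) hT).2 h)
  have mucongr : ∀ S ∈ 𝒳, ∀ T ∈ 𝒳,
      (∀ x ∈ X, ∀ᵐ ω ∂P, ω ∈ indBase P S x ↔ ω ∈ indBase P T x) → μ S =ᵐ[P] μ T :=
    fun S hS T hT h => hcongr S hS T hT ((ceq_iff (hc S hS) (hc T hT)).2 h)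
  have hdiff : ∀ S ∈ 𝒳, ∀ T ∈ 𝒳, cInf₂ P X S (ccompl P X T) ∈ 𝒳 :=
    fun S hS T hT => (hr S hS T hT).1
  have hsup : ∀ S ∈ 𝒳, ∀ T ∈ 𝒳, cSup₂ P X S T ∈ 𝒳 :=
    fun S hS T hT => (hr S hS T hT).2
  have dspec : ∀ S ∈ 𝒳, ∀ T ∈ 𝒳, ∀ x ∈ X, ∀ᵐ ω ∂P,
      ω ∈ indBase P (cInf₂ P X S (ccompl P X T)) x ↔
        (ω ∈ indBase P S x ∧ ω ∉ indBase P T x) :=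
    fun S hS T hT => (cdiff_spec hX (hc S hS) (hc T hT)).2
  have sspec : ∀ S ∈ 𝒳, ∀ T ∈ 𝒳, ∀ x ∈ X, ∀ᵐ ω ∂P,
      ω ∈ indBase P (cSup₂ P X S T) x ↔
        (ω ∈ indBase P S x ∨ ω ∈ indBase P T x) :=
    fun S hS T hT => (cSup₂_spec hX (hc S hS) (hc T hT)).2
  have ispec : ∀ S ∈ 𝒳, ∀ T ∈ 𝒳, ∀ x ∈ X, ∀ᵐ ω ∂P,
      ω ∈ indBase P (cInf₂ P X S T) x ↔
        (ω ∈ indBase P S x ∧ ω ∈ indBase P T x) :=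
    fun S hS T hT => (cInf₂_spec hX (hc S hS) (hc T hT)).2
  have hinf : ∀ S ∈ 𝒳, ∀ T ∈ 𝒳, cInf₂ P X S T ∈ 𝒳 := by
    intro S hS T hT
    refine sat _ (hdiff S hS _ (hdiff S hS T hT)) _ (cInf₂_spec hX (hc S hS) (hc T hT)).1 ?_
    intro x hx
    filter_upwards [dspec S hS _ (hdiff S hS T hT) x hx, dspec S hS T hT x hx,
      ispec S hS T hT x hx] with ω a b c
    tauto
  -- two-set additivity
  have add2 : ∀ S ∈ 𝒳, ∀ T ∈ 𝒳, ∀ U ∈ 𝒳,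
      (∀ x ∈ X, ∀ᵐ ω ∂P, ¬ (ω ∈ indBase P S x ∧ ω ∈ indBase P T x)) →
      (∀ x ∈ X, ∀ᵐ ω ∂P, ω ∈ indBase P U x ↔ (ω ∈ indBase P S x ∨ ω ∈ indBase P T x)) →
      ∀ᵐ ω ∂P, μ U ω = μ S ω + μ T ω := by
    intro S hS T hT U hU hd hUe
    have hST := hsup S hS T hT
    have h1 := hadd 2 ![S, T] (by intro i; fin_cases i <;> simpa)
      (by
        have h12 := (cdisjoint_iff hX (hc S hS) (hc T hT)).2 hd
        have h21 := (cdisjoint_iff hX (hc T hT) (hc S hS)).2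
          (fun x hx => (hd x hx).mono fun ω a b => a ⟨b.2, b.1⟩)
        intro i j hij
        fin_cases i <;> fin_cases j <;> simp_all)
      (by rw [← cSup₂_eq]; exact hST)
    rw [← cSup₂_eq] at h1
    have h2 := mucongr U hU _ hST (fun x hx => by
      filter_upwards [hUe x hx, sspec S hS T hT x hx] with ω a b
      tauto)
    filter_upwards [h1, h2] with ω a b
    rw [b, a]
    simp
  have addDiff : ∀ S ∈ 𝒳, ∀ T ∈ 𝒳, cle P S T →
      ∀ᵐ ω ∂P, μ T ω = μ S ω + μ (cInf₂ P X T (ccompl P X S)) ω := by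
    intro S hS T hT hle
    rw [cle_iff (hc S hS) (hc T hT)] at hle
    refine add2 S hS _ (hdiff T hT S hS) T hT ?_ ?_
    · intro x hx
      filter_upwards [dspec T hT S hS x hx] with ω a
      tauto
    · intro x hx
      filter_upwards [dspec T hT S hS x hx, hle x hx] with ω a b
      tauto
  have m3 : ∀ S ∈ 𝒳, ∀ T ∈ 𝒳,
      (fun ω => μ (cSup₂ P X S T) ω + μ (cInf₂ P X S T) ω) =ᵐ[P]
        fun ω => μ S ω + μ T ω := by
    intro S hS T hT
    have h1 := add2 S hS _ (hdiff T hT S hS) _ (hsup S hS T hT)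
      (by
        intro x hx
        filter_upwards [dspec T hT S hS x hx] with ω a
        tauto)
      (by
        intro x hx
        filter_upwards [dspec T hT S hS x hx, sspec S hS T hT x hx] with ω a b
        tauto)
    have h2 := add2 _ (hinf S hS T hT) _ (hdiff T hT S hS) T hT
      (by
        intro x hx
        filter_upwards [dspec T hT S hS x hx, ispec S hS T hT x hx] with ω a b
        tauto)
      (by
        intro x hx
        filter_upwards [dspec T hT S hS x hx, ispec S hS T hT x hx] with ω a b
        tauto)
    filter_upwards [h1, h2] with ω a b
    rw [a, b]
    ring
  have m4 : ∀ S ∈ 𝒳, ∀ T ∈ 𝒳, cle P S T → ∀ᵐ ω ∂P, μ S ω ≤ μ T ω := by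
    intro S hS T hT hle
    filter_upwards [addDiff S hS T hT hle] with ω a
    rw [a]
    exact le_self_add
  have m5 : ∀ S ∈ 𝒳, ∀ T ∈ 𝒳, cle P S T → (∀ᵐ ω ∂P, μ S ω < ∞) →
      μ (cInf₂ P X T (ccompl P X S)) =ᵐ[P] fun ω => μ T ω - μ S ω := by
    intro S hS T hT hle hfin
    filter_upwards [addDiff S hS T hT hle, hfin] with ω a b
    rw [a, ENNReal.add_sub_cancel_left b.ne]
  -- partial unions
  have partialU : ∀ S : ℕ → CondRaw Ω E, (∀ k, S k ∈ 𝒳) → ∃ U : ℕ → CondRaw Ω E,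
      (∀ k, U k ∈ 𝒳) ∧ U 0 = S 0 ∧ (∀ k, U (k + 1) = cSup₂ P X (U k) (S (k + 1))) ∧
      (∀ k, cle P (U k) (U (k + 1))) ∧
      ∀ x ∈ X, ∀ᵐ ω ∂P, ∀ k, ω ∈ indBase P (U k) x ↔ ∃ i ≤ k, ω ∈ indBase P (S i) x := by
    intro S hS
    let U : ℕ → CondRaw Ω E := fun n =>
      Nat.rec (S 0) (fun k V => cSup₂ P X V (S (k + 1))) n
    have hU : ∀ k, U k ∈ 𝒳 := by
      intro k
      induction k with
      | zero => exact hS 0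
      | succ k ih => exact hsup _ ih _ (hS (k + 1))
    have hspec : ∀ k, ∀ x ∈ X, ∀ᵐ ω ∂P, ω ∈ indBase P (U (k + 1)) x ↔
        (ω ∈ indBase P (U k) x ∨ ω ∈ indBase P (S (k + 1)) x) :=
      fun k => sspec (U k) (hU k) _ (hS (k + 1))
    refine ⟨U, hU, rfl, fun k => rfl, ?_, ?_⟩
    · intro k
      rw [cle_iff (hc _ (hU k)) (hc _ (hU (k + 1)))]
      intro x hx
      filter_upwards [hspec k x hx] with ω a b using a.2 (Or.inl b)
    · intro x hx
      filter_upwards [ae_all_iff.2 fun k => hspec k x hx] with ω h k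
      induction k with
      | zero =>
        constructor
        · intro a; exact ⟨0, le_rfl, a⟩
        · rintro ⟨i, hi, a⟩
          obtain rfl : i = 0 := by omega
          exact a
      | succ k ih =>
        rw [h k, ih]
        constructor
        · rintro (⟨i, hi, a⟩ | a)
          · exact ⟨i, by omega, a⟩
          · exact ⟨k + 1, le_rfl, a⟩
        · rintro ⟨i, hi, a⟩
          rcases Nat.lt_or_ge k i with h' | h'
          · obtain rfl : i = k + 1 := by omega
            exact Or.inr a
          · exact Or.inl ⟨i, h', a⟩
  have supspec : ∀ S : ℕ → CondRaw Ω E, (∀ k, S k ∈ 𝒳) → IsCond P X (cSupFam P X S) ∧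
      ∀ x ∈ X, ∀ᵐ ω ∂P, ω ∈ indBase P (cSupFam P X S) x ↔ ∃ i, ω ∈ indBase P (S i) x :=
    fun S hS => cSupFam_spec hX S fun k => hc _ (hS k)
  have infspec : ∀ S : ℕ → CondRaw Ω E, (∀ k, S k ∈ 𝒳) → IsCond P X (cInfFam P X S) ∧
      ∀ x ∈ X, ∀ᵐ ω ∂P, ω ∈ indBase P (cInfFam P X S) x ↔ ∀ i, ω ∈ indBase P (S i) x :=
    fun S hS => cInfFam_spec hX S fun k => hc _ (hS k)
  -- union of partial unions
  have partialSup : ∀ S : ℕ → CondRaw Ω E, (∀ k, S k ∈ 𝒳) → cSupFam P X S ∈ 𝒳 →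
      ∀ U : ℕ → CondRaw Ω E, (∀ k, U k ∈ 𝒳) →
      (∀ x ∈ X, ∀ᵐ ω ∂P, (∃ k, ω ∈ indBase P (U k) x) ↔ ∃ i, ω ∈ indBase P (S i) x) →
      cSupFam P X U ∈ 𝒳 ∧ μ (cSupFam P X S) =ᵐ[P] μ (cSupFam P X U) := by
    intro S hS hSS U hU h
    have hh : ∀ x ∈ X, ∀ᵐ ω ∂P, ω ∈ indBase P (cSupFam P X S) x ↔
        ω ∈ indBase P (cSupFam P X U) x := by
      intro x hx
      filter_upwards [h x hx, (supspec S hS).2 x hx, (supspec U hU).2 x hx] with ω a b c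
      rw [b, c, a]
    have hm := sat _ hSS _ (supspec U hU).1 hh
    exact ⟨hm, mucongr _ hSS _ hm hh⟩
  have exLe : ∀ (p q : ℕ → Prop), (∀ k, q k ↔ ∃ i ≤ k, p i) → ((∃ k, q k) ↔ ∃ i, p i) := by
    intro p q h
    constructor
    · rintro ⟨k, hk⟩
      obtain ⟨i, -, hi⟩ := (h k).1 hk
      exact ⟨i, hi⟩
    · rintro ⟨i, hi⟩
      exact ⟨i, (h i).2 ⟨i, le_rfl, hi⟩⟩
  have tsumSup : ∀ f : ℕ → ℝ≥0∞, ∑' k, f k = ⨆ n, ∑ k ∈ Finset.range (n + 1), f k := fun f =>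
    ENNReal.tsum_eq_iSup_nat' (tendsto_add_atTop_nat 1)
  have m7a : M2 P X 𝒳 μ →
      ∀ S : ℕ → CondRaw Ω E, (∀ k, S k ∈ 𝒳) → (∀ k, cle P (S k) (S (k + 1))) →
        cSupFam P X S ∈ 𝒳 →
        μ (cSupFam P X S) =ᵐ[P] fun ω => ⨆ k, μ (S k) ω := by
    intro hM2 S hS hinc hSS
    let D : ℕ → CondRaw Ω E := fun n =>
      Nat.casesOn n (S 0) (fun k => cInf₂ P X (S (k + 1)) (ccompl P X (S k)))
    have hD : ∀ k, D k ∈ 𝒳 := by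
      rintro (_ | k)
      · exact hS 0
      · exact hdiff _ (hS (k + 1)) _ (hS k)
    have hDs : ∀ k, ∀ x ∈ X, ∀ᵐ ω ∂P, ω ∈ indBase P (D (k + 1)) x ↔
        (ω ∈ indBase P (S (k + 1)) x ∧ ω ∉ indBase P (S k) x) :=
      fun k => dspec _ (hS (k + 1)) _ (hS k)
    have hinc' : ∀ k, ∀ x ∈ X, ∀ᵐ ω ∂P, ω ∈ indBase P (S k) x → ω ∈ indBase P (S (k + 1)) x :=
      fun k => (cle_iff (hc _ (hS k)) (hc _ (hS (k + 1)))).1 (hinc k)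
    have hdisj : ∀ i j, i < j → ∀ x ∈ X, ∀ᵐ ω ∂P,
        ¬ (ω ∈ indBase P (D i) x ∧ ω ∈ indBase P (D j) x) := by
      intro i j hij x hx
      filter_upwards [ae_all_iff.2 fun k => hDs k x hx, ae_all_iff.2 fun k => hinc' k x hx]
        with ω a b
      rintro ⟨h1, h2⟩
      have hSi : ω ∈ indBase P (S i) x := by
        rcases i with _ | i
        · exact h1
        · exact ((a i).1 h1).1
      obtain ⟨j, rfl⟩ : ∃ l, j = l + 1 := ⟨j - 1, by omega⟩
      have hSj : ω ∈ indBase P (S j) x :=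
        Nat.le_induction hSi (fun k _ hk => b k hk) j (by omega)
      exact ((a j).1 h2).2 hSj
    have hunion : ∀ x ∈ X, ∀ᵐ ω ∂P, (∃ k, ω ∈ indBase P (D k) x) ↔
        ∃ i, ω ∈ indBase P (S i) x := by
      intro x hx
      filter_upwards [ae_all_iff.2 fun k => hDs k x hx] with ω a
      constructor
      · rintro ⟨_ | k, hk⟩
        · exact ⟨0, hk⟩
        · exact ⟨k + 1, ((a k).1 hk).1⟩
      · rintro ⟨i, hi⟩
        induction i with
        | zero => exact ⟨0, hi⟩
        | succ i ih =>
          by_cases h : ω ∈ indBase P (S i) x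
          · exact ih h
          · exact ⟨i + 1, (a i).2 ⟨hi, h⟩⟩
    obtain ⟨hDD, hmu⟩ := partialSup S hS hSS D hD hunion
    have h2 := hM2 D hD (by
      intro i j hij
      rw [cdisjoint_iff hX (hc _ (hD i)) (hc _ (hD j))]
      rcases lt_or_gt_of_ne hij with h | h
      · exact hdisj i j h
      · exact fun x hx => (hdisj j i h x hx).mono fun ω a b => a ⟨b.2, b.1⟩) hDD
    have h3 : ∀ k, ∀ᵐ ω ∂P, μ (S (k + 1)) ω = μ (S k) ω + μ (D (k + 1)) ω :=
      fun k => addDiff _ (hS k) _ (hS (k + 1)) (hinc k)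
    filter_upwards [hmu, h2, ae_all_iff.2 h3] with ω a b c
    rw [a, b, tsumSup]
    congr 1
    ext n
    induction n with
    | zero => simp [D]
    | succ n ih => rw [Finset.sum_range_succ, ih, c n]
  have m6 : M2 P X 𝒳 μ →
      ∀ S : ℕ → CondRaw Ω E, (∀ k, S k ∈ 𝒳) → cSupFam P X S ∈ 𝒳 →
        ∀ᵐ ω ∂P, μ (cSupFam P X S) ω ≤ ∑' k, μ (S k) ω := by
    intro hM2 S hS hSS
    obtain ⟨U, hU, hU0, hUs, hUi, hUe⟩ := partialU S hS
    obtain ⟨hUU, hmu⟩ := partialSup S hS hSS U hU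
      (fun x hx => (hUe x hx).mono fun ω h => exLe _ _ h)
    have h1 := m7a hM2 U hU hUi hUU
    have h2 : ∀ k, ∀ᵐ ω ∂P, μ (U (k + 1)) ω ≤ μ (U k) ω + μ (S (k + 1)) ω := by
      intro k
      filter_upwards [m3 _ (hU k) _ (hS (k + 1))] with ω a
      rw [← a, hUs k]
      exact le_self_add
    filter_upwards [hmu, h1, ae_all_iff.2 h2] with ω a b c
    rw [a, b, tsumSup]
    refine iSup_mono fun n => ?_
    induction n with
    | zero => simp [hU0]
    | succ n ih =>
      rw [Finset.sum_range_succ]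
      exact (c n).trans (add_le_add_left ih _)
  have m7b : (∀ S : ℕ → CondRaw Ω E, (∀ k, S k ∈ 𝒳) → (∀ k, cle P (S k) (S (k + 1))) →
        cSupFam P X S ∈ 𝒳 →
        μ (cSupFam P X S) =ᵐ[P] fun ω => ⨆ k, μ (S k) ω) → M2 P X 𝒳 μ := by
    intro hcb S hS hdis hSS
    obtain ⟨U, hU, hU0, hUs, hUi, hUe⟩ := partialU S hS
    obtain ⟨hUU, hmu⟩ := partialSup S hS hSS U hU
      (fun x hx => (hUe x hx).mono fun ω h => exLe _ _ h)
    have h1 := hcb U hU hUi hUU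
    have h2 : ∀ k, ∀ᵐ ω ∂P, μ (U (k + 1)) ω = μ (U k) ω + μ (S (k + 1)) ω := by
      intro k
      refine add2 _ (hU k) _ (hS (k + 1)) _ (hU (k + 1)) ?_ ?_
      · intro x hx
        have h3 : ∀ i, ∀ᵐ ω ∂P, i ≤ k →
            ¬ (ω ∈ indBase P (S i) x ∧ ω ∈ indBase P (S (k + 1)) x) := by
          intro i
          by_cases hik : i ≤ k
          · exact ((cdisjoint_iff hX (hc _ (hS i)) (hc _ (hS (k + 1)))).1
              (hdis i (k + 1) (by omega)) x hx).mono fun ω a _ => a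
          · exact ae_of_all _ fun ω a => absurd a hik
        filter_upwards [hUe x hx, ae_all_iff.2 h3] with ω a b
        rintro ⟨h4, h5⟩
        obtain ⟨i, hi, h6⟩ := (a k).1 h4
        exact b i hi ⟨h6, h5⟩
      · rw [hUs k]
        exact sspec _ (hU k) _ (hS (k + 1))
    filter_upwards [hmu, h1, ae_all_iff.2 h2] with ω a b c
    rw [a, b, tsumSup]
    congr 1
    ext n
    induction n with
    | zero => simp [hU0]
    | succ n ih => rw [Finset.sum_range_succ, c n, ih]
  refine ⟨m3, m4, m5, m6, ⟨m7a, m7b⟩, fun hfin => ⟨fun hM2 => ?_, fun hca => m7b ?_⟩⟩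
  · -- continuity from above
    intro S hS hdec hSS
    have hdec' : ∀ k, ∀ x ∈ X, ∀ᵐ ω ∂P, ω ∈ indBase P (S (k + 1)) x → ω ∈ indBase P (S k) x :=
      fun k => (cle_iff (hc _ (hS (k + 1))) (hc _ (hS k))).1 (hdec k)
    have hle0 : ∀ k, cle P (S k) (S 0) := by
      intro k
      rw [cle_iff (hc _ (hS k)) (hc _ (hS 0))]
      intro x hx
      filter_upwards [ae_all_iff.2 fun k => hdec' k x hx] with ω a
      induction k with
      | zero => exact fun h => h
      | succ k ih => exact fun h => ih (a k h)
    have hleI : cle P (cInfFam P X S) (S 0) := by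
      rw [cle_iff (hc _ hSS) (hc _ (hS 0))]
      intro x hx
      filter_upwards [(infspec S hS).2 x hx] with ω a b using a.1 b 0
    let T : ℕ → CondRaw Ω E := fun k => cInf₂ P X (S 0) (ccompl P X (S k))
    have hT : ∀ k, T k ∈ 𝒳 := fun k => hdiff _ (hS 0) _ (hS k)
    have hTs : ∀ k, ∀ x ∈ X, ∀ᵐ ω ∂P, ω ∈ indBase P (T k) x ↔
        (ω ∈ indBase P (S 0) x ∧ ω ∉ indBase P (S k) x) :=
      fun k => dspec _ (hS 0) _ (hS k)
    have hTi : ∀ k, cle P (T k) (T (k + 1)) := by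
      intro k
      rw [cle_iff (hc _ (hT k)) (hc _ (hT (k + 1)))]
      intro x hx
      filter_upwards [hTs k x hx, hTs (k + 1) x hx, hdec' k x hx] with ω a b c
      tauto
    have hTI : ∀ x ∈ X, ∀ᵐ ω ∂P,
        ω ∈ indBase P (cInf₂ P X (S 0) (ccompl P X (cInfFam P X S))) x ↔
          ω ∈ indBase P (cSupFam P X T) x := by
      intro x hx
      filter_upwards [dspec _ (hS 0) _ hSS x hx, (infspec S hS).2 x hx, (supspec T hT).2 x hx,
        ae_all_iff.2 fun k => hTs k x hx] with ω a b c d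
      rw [a, b, c]
      push Not
      constructor
      · rintro ⟨h1, i, h2⟩
        exact ⟨i, (d i).2 ⟨h1, h2⟩⟩
      · rintro ⟨i, h1⟩
        exact ⟨((d i).1 h1).1, i, ((d i).1 h1).2⟩
    have hdI := hdiff _ (hS 0) _ hSS
    have hTT := sat _ hdI _ (supspec T hT).1 hTI
    have h1 := m7a hM2 T hT hTi hTT
    have h2 := mucongr _ hdI _ hTT hTI
    have h3 := m5 _ hSS _ (hS 0) hleI (hfin _ hSS)
    have h4 : ∀ k, μ (T k) =ᵐ[P] fun ω => μ (S 0) ω - μ (S k) ω := fun k =>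
      m5 _ (hS k) _ (hS 0) (hle0 k) (hfin _ (hS k))
    filter_upwards [h1, h2, h3, ae_all_iff.2 h4, m4 _ hSS _ (hS 0) hleI, hfin _ (hS 0)]
      with ω a b c d f g
    have key : μ (S 0) ω - μ (cInfFam P X S) ω = μ (S 0) ω - ⨅ k, μ (S k) ω := by
      rw [ENNReal.sub_iInf, ← c, b, a]
      exact iSup_congr d
    rw [← ENNReal.sub_sub_cancel g.ne f, key,
      ENNReal.sub_sub_cancel g.ne (iInf_le (fun k => μ (S k) ω) 0)]
  · -- continuity from below from continuity from above
    intro S hS hinc hSS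
    have hinc' : ∀ k, ∀ x ∈ X, ∀ᵐ ω ∂P, ω ∈ indBase P (S k) x → ω ∈ indBase P (S (k + 1)) x :=
      fun k => (cle_iff (hc _ (hS k)) (hc _ (hS (k + 1)))).1 (hinc k)
    have hle : ∀ k, cle P (S k) (cSupFam P X S) := by
      intro k
      rw [cle_iff (hc _ (hS k)) (hc _ hSS)]
      intro x hx
      filter_upwards [(supspec S hS).2 x hx] with ω a b using a.2 ⟨k, b⟩
    let T : ℕ → CondRaw Ω E := fun k => cInf₂ P X (cSupFam P X S) (ccompl P X (S k))
    have hT : ∀ k, T k ∈ 𝒳 := fun k => hdiff _ hSS _ (hS k)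
    have hTs : ∀ k, ∀ x ∈ X, ∀ᵐ ω ∂P, ω ∈ indBase P (T k) x ↔
        (ω ∈ indBase P (cSupFam P X S) x ∧ ω ∉ indBase P (S k) x) :=
      fun k => dspec _ hSS _ (hS k)
    have hTd : ∀ k, cle P (T (k + 1)) (T k) := by
      intro k
      rw [cle_iff (hc _ (hT (k + 1))) (hc _ (hT k))]
      intro x hx
      filter_upwards [hTs k x hx, hTs (k + 1) x hx, hinc' k x hx] with ω a b c
      tauto
    have hI0 : ∀ x ∈ X, ∀ᵐ ω ∂P, ω ∉ indBase P (cInfFam P X T) x := by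
      intro x hx
      filter_upwards [(infspec T hT).2 x hx, (supspec S hS).2 x hx,
        ae_all_iff.2 fun k => hTs k x hx] with ω a b c h
      rw [a] at h
      obtain ⟨i, hi⟩ := b.1 ((c 0).1 (h 0)).1
      exact ((c i).1 (h i)).2 hi
    have hB := hdiff _ hSS _ hSS
    have hIm : cInfFam P X T ∈ 𝒳 := by
      refine sat _ hB _ (infspec T hT).1 ?_
      intro x hx
      filter_upwards [hI0 x hx, dspec _ hSS _ hSS x hx] with ω a b
      tauto
    have hz : ∀ᵐ ω ∂P, μ (cInfFam P X T) ω = 0 := by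
      have h := add2 _ hIm _ hIm _ hIm
        (fun x hx => (hI0 x hx).mono fun ω a b => a b.1)
        (fun x hx => ae_of_all _ fun ω => by tauto)
      filter_upwards [h, hfin _ hIm] with ω a b
      by_contra h0
      exact (ENNReal.lt_add_right b.ne h0).ne a
    have h1 := hca T hT hTd hIm
    have h4 : ∀ k, μ (T k) =ᵐ[P] fun ω => μ (cSupFam P X S) ω - μ (S k) ω := fun k =>
      m5 _ (hS k) _ hSS (hle k) (hfin _ (hS k))
    filter_upwards [h1, hz, ae_all_iff.2 h4, ae_all_iff.2 fun k => m4 _ (hS k) _ hSS (hle k),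
      hfin _ hSS] with ω a b c d f
    refine le_antisymm ?_ (iSup_le d)
    rw [← tsub_eq_zero_iff_le, ENNReal.sub_iSup f.ne, ← b, a]
    exact (iInf_congr c).symm

end CondMT
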